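/- Let z∞ ∈ [0,1). For all ℓ ≥ 0 and z ∈ ℝ with r := √(ℓ² + z²) < 1, one has (ℓ²/2)·F(r) + (z − z∞)·z·F(r) − (z − z∞)·arctanh(z∞) ≥ 0. (In the paper's notation this is the inequality A + B + C ≥ 0, valid at every point of the Bloch ball.) -/

import Mathlib

/-!
Write `a = z∞`, `A = artanh a`, `r = √(ℓ² + z²)` and `G = F r`, so that `r * G = artanh r`.
Eliminating `ℓ² = r² - z²`, the inequality multiplied by `2 * G > 0` becomes
`(a * G)² + A² ≤ (z * G - (a * G + A))² + (r * G)²`, where `|z * G| ≤ r * G` and `a * A ≥ 0`.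

* If `|a * G + A| ≤ r * G`, then `(a * G)² + A² ≤ (a * G + A)² ≤ (r * G)²` already suffices.
* Otherwise the right-hand side is monotone in `z` on `[-r, r]`, and its values at the endpoints
  exceed the left-hand side by `2 * G * (r ∓ a) * (artanh r ∓ artanh a)`, which is nonnegative
  because `artanh` is increasing and odd.
-/

/-- Inverse hyperbolic tangent: arctanh r = (1/2) log((1+r)/(1-r)). -/
noncomputable def artanh (r : ℝ) : ℝ := (1/2) * Real.log ((1 + r) / (1 - r))

/-- F(r) := arctanh(r)/r with the convention F(0) = 1. -/
noncomputable def F (r : ℝ) : ℝ := if r = 0 then 1 else artanh r / r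

/-- Fixed-point entropy production of the phase-covariant qubit dynamics,
extended to the whole Bloch ball, at the point with Bloch coordinates (ℓ, z). -/
noncomputable def sigmaFP (Γ γp zinf ℓ z : ℝ) : ℝ :=
  Γ * ℓ ^ 2 * F (Real.sqrt (ℓ ^ 2 + z ^ 2)) +
    γp * (zinf - z) * (artanh zinf - z * F (Real.sqrt (ℓ ^ 2 + z ^ 2)))

section Quadratic

variable {R : Type*} [CommRing R] [LinearOrder R] [IsStrictOrderedRing R] {p q s u : R}

lemma sq_add_sq_le_sub_sq_add_sq_of_le_add (hus : u ≤ s) (hs : s ≤ p + q)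
    (hpqs : 0 ≤ (s - p) * (s - q)) : p ^ 2 + q ^ 2 ≤ (u - (p + q)) ^ 2 + s ^ 2 := by
  have hslope : 0 ≤ (s - u) * (2 * (p + q) - s - u) := mul_nonneg (by linarith) (by linarith)
  linear_combination hslope + 2 * hpqs

lemma sq_add_sq_le_sub_sq_add_sq_of_abs_le (hus : |u| ≤ s) (hpq : 0 ≤ p * q)
    (hsub : 0 ≤ (s - p) * (s - q)) (hadd : 0 ≤ (s + p) * (s + q)) :
    p ^ 2 + q ^ 2 ≤ (u - (p + q)) ^ 2 + s ^ 2 := by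
  rcases le_total |p + q| s with hvertex | hvertex
  · calc
      p ^ 2 + q ^ 2 ≤ (p + q) ^ 2 := by linear_combination 2 * hpq
      _ ≤ s ^ 2 := sq_le_sq.2 (hvertex.trans (le_abs_self s))
      _ ≤ (u - (p + q)) ^ 2 + s ^ 2 := le_add_of_nonneg_left (sq_nonneg _)
  · rcases le_abs.1 hvertex with hright | hleft
    · exact sq_add_sq_le_sub_sq_add_sq_of_le_add (le_of_abs_le hus) hright hsub
    · have hreflected := sq_add_sq_le_sub_sq_add_sq_of_le_add (p := -p) (q := -q)
        (neg_le.1 (neg_le_of_abs_le hus)) (by linarith) (by simpa only [sub_neg_eq_add] using hadd)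
      linear_combination hreflected

end Quadratic

lemma artanh_eq_real_artanh {x : ℝ} (hx : x ∈ Set.Icc (-1) 1) : artanh x = Real.artanh x :=
  (Real.artanh_eq_half_log hx).symm

lemma artanh_zero : artanh 0 = 0 := by
  simp [artanh]

lemma artanh_neg (x : ℝ) : artanh (-x) = -artanh x := by
  simp only [artanh, sub_neg_eq_add, ← sub_eq_add_neg]
  rw [← inv_div (1 + x), Real.log_inv, mul_neg]

lemma strictMonoOn_artanh : StrictMonoOn artanh (Set.Ioo (-1) 1) :=
  Real.strictMonoOn_artanh.congr fun _ hx ↦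
    (artanh_eq_real_artanh (Set.Ioo_subset_Icc_self hx)).symm

lemma sub_mul_artanh_sub_artanh_nonneg {x y : ℝ} (hx : x ∈ Set.Ioo (-1) 1)
    (hy : y ∈ Set.Ioo (-1) 1) : 0 ≤ (x - y) * (artanh x - artanh y) := by
  rw [mul_comm]
  exact (monovaryOn_id_iff.2 strictMonoOn_artanh.monotoneOn).sub_mul_sub_nonneg hy hx

lemma add_mul_artanh_add_artanh_nonneg {x y : ℝ} (hx : x ∈ Set.Ioo (-1) 1)
    (hy : y ∈ Set.Ioo (-1) 1) : 0 ≤ (x + y) * (artanh x + artanh y) := by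
  have hy_neg : -y ∈ Set.Ioo (-1) 1 := ⟨neg_lt_neg hy.2, neg_lt.1 hy.1⟩
  simpa only [artanh_neg, sub_neg_eq_add] using sub_mul_artanh_sub_artanh_nonneg hx hy_neg

lemma mul_artanh_nonneg {x : ℝ} (hx : x ∈ Set.Ioo (-1) 1) : 0 ≤ x * artanh x := by
  simpa only [artanh_zero, sub_zero] using
    sub_mul_artanh_sub_artanh_nonneg hx (y := 0) (by simp)

lemma mul_F (r : ℝ) : r * F r = artanh r := by
  rcases eq_or_ne r 0 with rfl | hr
  · rw [zero_mul, artanh_zero]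
  · rw [F, if_neg hr, mul_div_cancel₀ _ hr]

lemma F_pos {r : ℝ} (hr : r ∈ Set.Ioo (-1) 1) : 0 < F r := by
  have hzero : (0 : ℝ) ∈ Set.Ioo (-1) 1 := by simp
  rcases lt_trichotomy r 0 with hneg | rfl | hpos
  · rw [F, if_neg hneg.ne]
    exact div_pos_of_neg_of_neg (artanh_zero ▸ strictMonoOn_artanh hr hzero hneg) hneg
  · simp [F]
  · rw [F, if_neg hpos.ne']
    exact div_pos (artanh_zero ▸ strictMonoOn_artanh hzero hr hpos) hpos

lemma sq_mul_F_add_sq_artanh_le {a r z : ℝ} (ha : a ∈ Set.Ioo (-1) 1) (hr : r < 1)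
    (hz : |z| ≤ r) :
    (a * F r) ^ 2 + artanh a ^ 2 ≤ (z * F r - (a * F r + artanh a)) ^ 2 + artanh r ^ 2 := by
  have hr_mem : r ∈ Set.Ioo (-1) 1 := ⟨by linarith [abs_nonneg z], hr⟩
  have hF : 0 < F r := F_pos hr_mem
  apply sq_add_sq_le_sub_sq_add_sq_of_abs_le
  · calc
      |z * F r| = |z| * F r := by rw [abs_mul, abs_of_pos hF]
      _ ≤ r * F r := mul_le_mul_of_nonneg_right hz hF.le
      _ = artanh r := mul_F r
  · linear_combination F r * mul_artanh_nonneg ha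
  · calc
      0 ≤ F r * ((r - a) * (artanh r - artanh a)) :=
        mul_nonneg hF.le (sub_mul_artanh_sub_artanh_nonneg hr_mem ha)
      _ = (artanh r - a * F r) * (artanh r - artanh a) := by rw [← mul_F r]; ring
  · calc
      0 ≤ F r * ((r + a) * (artanh r + artanh a)) :=
        mul_nonneg hF.le (add_mul_artanh_add_artanh_nonneg hr_mem ha)
      _ = (artanh r + a * F r) * (artanh r + artanh a) := by rw [← mul_F r]; ring

theorem A_add_B_add_C_nonneg_general {zinf ℓ z : ℝ} (hzinf : zinf ∈ Set.Ioo (-1) 1)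
    (hr : Real.sqrt (ℓ ^ 2 + z ^ 2) < 1) :
    0 ≤ ℓ ^ 2 / 2 * F (Real.sqrt (ℓ ^ 2 + z ^ 2))
        + (z - zinf) * z * F (Real.sqrt (ℓ ^ 2 + z ^ 2))
        - (z - zinf) * artanh zinf := by
  have hsq : Real.sqrt (ℓ ^ 2 + z ^ 2) ^ 2 = ℓ ^ 2 + z ^ 2 := Real.sq_sqrt (by positivity)
  have hz : |z| ≤ Real.sqrt (ℓ ^ 2 + z ^ 2) :=
    Real.abs_le_sqrt (le_add_of_nonneg_left (sq_nonneg ℓ))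
  set r := Real.sqrt (ℓ ^ 2 + z ^ 2)
  have hF : 0 < F r := F_pos ⟨by linarith [abs_nonneg z], hr⟩
  refine nonneg_of_mul_nonneg_right ?_ (mul_pos two_pos hF)
  have hquad := sq_mul_F_add_sq_artanh_le hzinf hr hz
  rw [← mul_F r] at hquad
  linear_combination hquad + F r ^ 2 * hsq

/-- The inequality A + B + C ≥ 0, valid at every point of the Bloch ball. -/
theorem A_add_B_add_C_nonneg
    (zinf : ℝ) (hz0 : 0 ≤ zinf) (hz1 : zinf < 1)
    (ℓ z : ℝ) (hℓ : 0 ≤ ℓ) (hr : Real.sqrt (ℓ ^ 2 + z ^ 2) < 1) :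
    0 ≤ ℓ ^ 2 / 2 * F (Real.sqrt (ℓ ^ 2 + z ^ 2))
        + (z - zinf) * z * F (Real.sqrt (ℓ ^ 2 + z ^ 2))
        - (z - zinf) * artanh zinf := by
  exact A_add_B_add_C_nonneg_general ⟨by linarith, hz1⟩ hr
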